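/- (Theorem 1, part 1) For every model M, world w and hybrid formula φ: I have a winning strategy for the semantic game G(M, (P, w : φ)) if and only if M, w ⊨ φ. -/

import Mathlib

/-- Hybrid logic formulas over nominals `ℕ` and propositional variables `ℕ`
(the two sorts are kept disjoint by the constructors). -/
inductive Form : Type where
  | prop : ℕ → Form
  | nom : ℕ → Form
  | rel : ℕ → ℕ → Form
  | and : Form → Form → Form
  | or : Form → Form → Form
  | imp : Form → Form → Form
  | neg : Form → Form
  | at_ : ℕ → Form → Form
  | box : Form → Form
  | dia : Form → Form

/-- A model for hybrid logic: a nonempty set of worlds, an accessibility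
relation, a valuation and an assignment of nominals to worlds. -/
structure Model where
  W : Type
  ne : Nonempty W
  R : W → W → Prop
  V : ℕ → W → Prop
  g : ℕ → W

/-- Satisfaction of a formula at a world of a model. -/
def sat (M : Model) : M.W → Form → Prop
  | w, .prop p => M.V p w
  | w, .nom i => M.g i = w
  | _, .rel i j => M.R (M.g i) (M.g j)
  | w, .and φ ψ => sat M w φ ∧ sat M w ψ
  | w, .or φ ψ => sat M w φ ∨ sat M w ψ
  | w, .imp φ ψ => ¬ sat M w φ ∨ sat M w ψ
  | w, .neg φ => ¬ sat M w φ
  | _, .at_ i φ => sat M (M.g i) φ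
  | w, .box φ => ∀ v, M.R w v → sat M v φ
  | w, .dia φ => ∃ v, M.R w v ∧ sat M v φ

/-- A model is named iff every world has a name, i.e. the assignment is surjective. -/
def Model.Named (M : Model) : Prop := Function.Surjective M.g

/-- A formula is valid iff it is true at every world of every model. -/
def Valid (φ : Form) : Prop := ∀ (M : Model) (w : M.W), sat M w φ

/-- Roles: `pro` means I am the proponent (`P`-state), `opp` that I am the opponent (`O`-state). -/
inductive Role : Type where
  | pro : Role
  | opp : Role

/-- Game states of the semantic game over a model: `loc r w φ` is the state
`Q, w : φ` and `glob r φ` is the state `Q : φ` (with `Q = P` for `r = pro`, `Q = O` for `r = opp`). -/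
inductive GState (M : Model) : Type where
  | loc : Role → M.W → Form → GState M
  | glob : Role → Form → GState M

/-- `IWins M s` holds iff I have a winning strategy for the semantic game `G(M, s)`:
a subtree of the game tree keeping exactly one child of every non-leaf node labelled "I"
(and all children of nodes labelled "Y"), all of whose leaves are labelled "I".
Each constructor corresponds to one game rule: at "I"-nodes I pick one child in which
I have a winning strategy; at "Y"-nodes I must have a winning strategy in every child;
leaves must be labelled "I". -/
inductive IWins (M : Model) : GState M → Prop where
  -- elementary leaves
  | proProp {w p} : M.V p w → IWins M (.loc .pro w (.prop p))
  | oppProp {w p} : ¬ M.V p w → IWins M (.loc .opp w (.prop p))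
  | proNom {w i} : M.g i = w → IWins M (.loc .pro w (.nom i))
  | oppNom {w i} : M.g i ≠ w → IWins M (.loc .opp w (.nom i))
  | proRel {w : M.W} {i j} : M.R (M.g i) (M.g j) → IWins M (.loc .pro w (.rel i j))
  | oppRel {w : M.W} {i j} : ¬ M.R (M.g i) (M.g j) → IWins M (.loc .opp w (.rel i j))
  -- disjunction
  | proOrL {w φ ψ} : IWins M (.loc .pro w φ) → IWins M (.loc .pro w (.or φ ψ))
  | proOrR {w φ ψ} : IWins M (.loc .pro w ψ) → IWins M (.loc .pro w (.or φ ψ))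
  | oppOr {w φ ψ} : IWins M (.loc .opp w φ) → IWins M (.loc .opp w ψ) →
      IWins M (.loc .opp w (.or φ ψ))
  -- conjunction
  | proAnd {w φ ψ} : IWins M (.loc .pro w φ) → IWins M (.loc .pro w ψ) →
      IWins M (.loc .pro w (.and φ ψ))
  | oppAndL {w φ ψ} : IWins M (.loc .opp w φ) → IWins M (.loc .opp w (.and φ ψ))
  | oppAndR {w φ ψ} : IWins M (.loc .opp w ψ) → IWins M (.loc .opp w (.and φ ψ))
  -- implication
  | proImpL {w φ ψ} : IWins M (.loc .opp w φ) → IWins M (.loc .pro w (.imp φ ψ))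
  | proImpR {w φ ψ} : IWins M (.loc .pro w ψ) → IWins M (.loc .pro w (.imp φ ψ))
  | oppImp {w φ ψ} : IWins M (.loc .pro w φ) → IWins M (.loc .opp w ψ) →
      IWins M (.loc .opp w (.imp φ ψ))
  -- negation (role switch)
  | proNeg {w φ} : IWins M (.loc .opp w φ) → IWins M (.loc .pro w (.neg φ))
  | oppNeg {w φ} : IWins M (.loc .pro w φ) → IWins M (.loc .opp w (.neg φ))
  -- @-operator
  | proAt {w i φ} : IWins M (.loc .pro (M.g i) φ) → IWins M (.loc .pro w (.at_ i φ))
  | oppAt {w i φ} : IWins M (.loc .opp (M.g i) φ) → IWins M (.loc .opp w (.at_ i φ))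
  -- box: for `P` a "Y"-node over all successors (a leaf labelled "I" if there are none);
  -- for `O` an "I"-node over all successors (a leaf labelled "Y" if there are none)
  | proBox {w φ} : (∀ v, M.R w v → IWins M (.loc .pro v φ)) → IWins M (.loc .pro w (.box φ))
  | oppBox {w φ} (v) : M.R w v → IWins M (.loc .opp v φ) → IWins M (.loc .opp w (.box φ))
  -- diamond: dual to box
  | proDia {w φ} (v) : M.R w v → IWins M (.loc .pro v φ) → IWins M (.loc .pro w (.dia φ))
  | oppDia {w φ} : (∀ v, M.R w v → IWins M (.loc .opp v φ)) → IWins M (.loc .opp w (.dia φ))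
  -- global states
  | proGlob {φ} : (∀ w, IWins M (.loc .pro w φ)) → IWins M (.glob .pro φ)
  | oppGlob {φ} (w) : IWins M (.loc .opp w φ) → IWins M (.glob .opp φ)

/-- Truth value associated with a game state. -/
def GState.good (M : Model) : GState M → Prop
  | .loc .pro w φ => sat M w φ
  | .loc .opp w φ => ¬ sat M w φ
  | .glob .pro φ => ∀ w, sat M w φ
  | .glob .opp φ => ∃ w, ¬ sat M w φ

theorem IWins.good {M : Model} {s : GState M} (h : IWins M s) : s.good M := by
  induction h <;> simp_all [GState.good, sat]
  case oppBox v h1 _ h2 => exact ⟨v, h1, h2⟩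
  case proDia v h1 _ h2 => exact ⟨v, h1, h2⟩
  case oppGlob v _ h2 => exact ⟨v, h2⟩

theorem IWins.complete (M : Model) (φ : Form) : ∀ w : M.W,
    (sat M w φ → IWins M (.loc .pro w φ)) ∧ (¬ sat M w φ → IWins M (.loc .opp w φ)) := by
  induction φ with
  | prop p => exact fun w => ⟨.proProp, .oppProp⟩
  | nom i => exact fun w => ⟨.proNom, .oppNom⟩
  | rel i j => exact fun w => ⟨.proRel, .oppRel⟩
  | and a b iha ihb =>
    refine fun w => ⟨fun h => .proAnd ((iha w).1 h.1) ((ihb w).1 h.2), fun h => ?_⟩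
    by_cases ha : sat M w a
    · exact .oppAndR ((ihb w).2 fun hb => h ⟨ha, hb⟩)
    · exact .oppAndL ((iha w).2 ha)
  | or a b iha ihb =>
    refine fun w => ⟨fun h => ?_, fun h =>
      .oppOr ((iha w).2 fun k => h (Or.inl k)) ((ihb w).2 fun k => h (Or.inr k))⟩
    rcases h with h | h
    · exact .proOrL ((iha w).1 h)
    · exact .proOrR ((ihb w).1 h)
  | imp a b iha ihb =>
    refine fun w => ⟨fun h => ?_, fun h =>
      .oppImp ((iha w).1 (by_contra fun k => h (Or.inl k))) ((ihb w).2 fun k => h (Or.inr k))⟩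
    rcases h with h | h
    · exact .proImpL ((iha w).2 h)
    · exact .proImpR ((ihb w).1 h)
  | neg a ih =>
    exact fun w => ⟨fun h => .proNeg ((ih w).2 h), fun h => .oppNeg ((ih w).1 (not_not.1 h))⟩
  | at_ i a ih =>
    exact fun w => ⟨fun h => .proAt ((ih _).1 h), fun h => .oppAt ((ih _).2 h)⟩
  | box a ih =>
    refine fun w => ⟨fun h => .proBox fun v hv => (ih v).1 (h v hv), fun h => ?_⟩
    simp only [sat, not_forall] at h
    obtain ⟨v, hv, hn⟩ := h
    exact .oppBox v hv ((ih v).2 hn)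
  | dia a ih =>
    refine fun w => ⟨?_, fun h => .oppDia fun v hv => (ih v).2 fun k => h ⟨v, hv, k⟩⟩
    rintro ⟨v, hv, k⟩
    exact .proDia v hv ((ih v).1 k)

/-- (Theorem 1, part 1) I have a winning strategy for `G(M, (P, w : φ))` iff `M, w ⊨ φ`. -/
theorem iWins_pro_iff_sat (M : Model) (w : M.W) (φ : Form) :
    IWins M (.loc .pro w φ) ↔ sat M w φ := by
  exact ⟨fun h => h.good, (IWins.complete M φ w).1⟩
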